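/- arXiv:1411.5033 — 2 statements merged into one kernel-verified Lean document; each statement's English description precedes it below -/
import Mathlib

section
/- If C₀ > 0 satisfies ‖u(0,·)‖²_{L²(ℝ)} + β‖∂ₓu(0,·)‖²_{L²(ℝ)} ≤ C₀, then for every t ≥ 0, ‖u(t,·)‖²_{L²(ℝ)} + β‖∂ₓu(t,·)‖²_{L²(ℝ)} + 2ε∫₀ᵗ‖∂ₓu(s,·)‖²_{L²(ℝ)} ds + 2βε∫₀ᵗ‖∂ₓ²u(s,·)‖²_{L²(ℝ)} ds ≤ C₀. -/
open MeasureTheory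

/-!
Multiply the equation by `2u - 2β uₓₓ`. Up to `x`-derivatives, the factor turns `uₜ` into
`∂ₜ (u² + β uₓ²)` and `-ε uₓₓ` into `2ε uₓ² + 2βε uₓₓ²`, while the nonlinear terms with
coefficients `A`, `B`, `C` become `-2β (A - B + C) u uₓ uₓₓ + β² (B + 2C) uₓ uₓₓ²`, which vanishes
for `B = 2A/3`, `C = -A/3`. What remains is a local balance law, and the divergence theorem on a
space-time rectangle whose sides avoid the support gives the energy balance, with equality.
-/

open Set Function

section PartialDerivatives

variable {E : Type*} [NormedAddCommGroup E] [NormedSpace ℝ E] {g : ℝ → ℝ → E}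

lemma uncurry_deriv_fst_eq_fderiv_uncurry (hg : Differentiable ℝ (uncurry g)) :
    (uncurry fun t x => deriv (fun s => g s x) t) = fun p => fderiv ℝ (uncurry g) p (1, 0) := by
  funext ⟨t, x⟩
  have hline : HasDerivAt (fun s : ℝ => (s, x)) (1, 0) t :=
    (hasDerivAt_id t).prodMk (hasDerivAt_const t x)
  exact ((hg (t, x)).hasFDerivAt.comp_hasDerivAt t hline).deriv

lemma uncurry_deriv_snd_eq_fderiv_uncurry (hg : Differentiable ℝ (uncurry g)) :
    (uncurry fun t => deriv (g t)) = fun p => fderiv ℝ (uncurry g) p (0, 1) := by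
  funext ⟨t, x⟩
  have hline : HasDerivAt (fun y : ℝ => (t, y)) (0, 1) x :=
    (hasDerivAt_const x t).prodMk (hasDerivAt_id x)
  exact ((hg (t, x)).hasFDerivAt.comp_hasDerivAt x hline).deriv

lemma contDiff_uncurry_deriv_fst {m n : WithTop ℕ∞} (hg : ContDiff ℝ n (uncurry g))
    (hmn : m + 1 ≤ n) : ContDiff ℝ m (uncurry fun t x => deriv (fun s => g s x) t) := by
  rw [uncurry_deriv_fst_eq_fderiv_uncurry
    ((hg.of_le (le_add_self.trans hmn)).differentiable one_ne_zero)]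
  exact (hg.fderiv_right hmn).clm_apply contDiff_const

lemma contDiff_uncurry_deriv_snd {m n : WithTop ℕ∞} (hg : ContDiff ℝ n (uncurry g))
    (hmn : m + 1 ≤ n) : ContDiff ℝ m (uncurry fun t => deriv (g t)) := by
  rw [uncurry_deriv_snd_eq_fderiv_uncurry
    ((hg.of_le (le_add_self.trans hmn)).differentiable one_ne_zero)]
  exact (hg.fderiv_right hmn).clm_apply contDiff_const

lemma deriv_fst_deriv_snd_comm (hg : ContDiff ℝ 2 (uncurry g)) (t x : ℝ) :
    deriv (fun s => deriv (g s) x) t = deriv (fun y => deriv (fun s => g s y) t) x := by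
  have hg1 : Differentiable ℝ (uncurry g) := hg.differentiable two_ne_zero
  have hfst : Differentiable ℝ (uncurry fun t x => deriv (fun s => g s x) t) :=
    (contDiff_uncurry_deriv_fst (m := 1) hg (by norm_num)).differentiable one_ne_zero
  have hsnd : Differentiable ℝ (uncurry fun t => deriv (g t)) :=
    (contDiff_uncurry_deriv_snd (m := 1) hg (by norm_num)).differentiable one_ne_zero
  have hg2 : DifferentiableAt ℝ (fderiv ℝ (uncurry g)) (t, x) :=
    (hg.fderiv_right (m := 1) (by norm_num)).differentiable one_ne_zero (t, x)
  have hts : deriv (fun s => deriv (g s) x) t =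
      fderiv ℝ (fderiv ℝ (uncurry g)) (t, x) (1, 0) (0, 1) := by
    refine (congrFun (uncurry_deriv_fst_eq_fderiv_uncurry hsnd) (t, x)).trans ?_
    simp [uncurry_deriv_snd_eq_fderiv_uncurry hg1, fderiv_clm_apply hg2]
  have hxt : deriv (fun y => deriv (fun s => g s y) t) x =
      fderiv ℝ (fderiv ℝ (uncurry g)) (t, x) (0, 1) (1, 0) := by
    refine (congrFun (uncurry_deriv_snd_eq_fderiv_uncurry hfst) (t, x)).trans ?_
    simp [uncurry_deriv_fst_eq_fderiv_uncurry hg1, fderiv_clm_apply hg2]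
  have hsymm : IsSymmSndFDerivAt ℝ (uncurry g) (t, x) :=
    hg.contDiffAt.isSymmSndFDerivAt (by simp)
  rw [hts, hxt, hsymm]

lemma deriv_eq_zero_of_eq_zero_off_isClosed {f : ℝ → E} {K : Set ℝ} (hK : IsClosed K)
    (hf : ∀ x ∉ K, f x = 0) : ∀ x ∉ K, deriv f x = 0 := fun _ hx =>
  deriv_of_notMem_tsupport fun h =>
    hx (closure_minimal (support_subset_iff'.2 hf) hK h)

end PartialDerivatives

section BalanceLaw

variable {E : Type*} [NormedAddCommGroup E] [NormedSpace ℝ E] {K : Set ℝ} {a b : ℝ}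

lemma integrable_sq_of_eq_zero_off_isCompact {f : ℝ → ℝ} (hK : IsCompact K) (hf : Continuous f)
    (hfK : ∀ x ∉ K, f x = 0) : Integrable fun x => f x ^ 2 :=
  (hf.pow 2).integrable_of_hasCompactSupport (.intro hK fun x hx => by simp [hfK x hx])

lemma intervalIntegrable_integral_of_eq_zero_off_isCompact {d : ℝ → ℝ → E} (hK : IsCompact K)
    (hd : Continuous (uncurry d)) (hdK : ∀ t ∈ uIcc a b, ∀ x ∉ K, d t x = 0) :
    IntervalIntegrable (fun t => ∫ x, d t x) volume a b := by
  have hcont : Continuous fun t => ∫ x in K, d t x :=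
    continuous_parametric_integral_of_continuous hd hK
  refine ContinuousOn.intervalIntegrable (hcont.continuousOn.congr fun t ht => ?_)
  exact (setIntegral_eq_integral_of_forall_compl_eq_zero (hdK t ht)).symm

theorem integral_add_integral_integral_eq_of_balanceLaw {η φ d : ℝ → ℝ → E}
    (hη : Differentiable ℝ (uncurry η)) (hφ : Differentiable ℝ (uncurry φ))
    (hd : Continuous (uncurry d)) (hK : Bornology.IsBounded K)
    (hηK : ∀ t ∈ uIcc a b, ∀ x ∉ K, η t x = 0) (hφK : ∀ t ∈ uIcc a b, ∀ x ∉ K, φ t x = 0)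
    (hdK : ∀ t ∈ uIcc a b, ∀ x ∉ K, d t x = 0)
    (hbal : ∀ t ∈ uIcc a b, ∀ x, deriv (fun s => η s x) t + deriv (φ t) x + d t x = 0) :
    (∫ x, η b x) + ∫ t in a..b, ∫ x, d t x = ∫ x, η a x := by
  obtain ⟨r, hr⟩ := hK.subset_ball 0
  have hKS : K ⊆ Ioo (-r) r := by rwa [Real.ball_eq_Ioo, zero_sub, zero_add] at hr
  have hIoc {f : ℝ → E} (hf : ∀ x ∉ K, f x = 0) : ∫ x in -r..r, f x = ∫ x, f x :=
    intervalIntegral.integral_eq_integral_of_support_subset <|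
      (support_subset_iff'.2 hf).trans (hKS.trans Ioo_subset_Ioc_self)
  have hφ_end (t) (ht : t ∈ uIcc a b) : φ t (-r) = 0 ∧ φ t r = 0 :=
    ⟨hφK t ht _ fun h => (hKS h).1.false, hφK t ht _ fun h => (hKS h).2.false⟩
  have hdiv : ∀ p ∈ uIcc a b ×ˢ uIcc (-r) r,
      fderiv ℝ (uncurry η) p (1, 0) + fderiv ℝ (uncurry φ) p (0, 1) = -uncurry d p := by
    rintro ⟨t, x⟩ ⟨ht, -⟩
    rw [← congrFun (uncurry_deriv_fst_eq_fderiv_uncurry hη) (t, x),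
      ← congrFun (uncurry_deriv_snd_eq_fderiv_uncurry hφ) (t, x)]
    exact eq_neg_of_add_eq_zero_left (hbal t ht x)
  have hint : IntegrableOn (fun p => fderiv ℝ (uncurry η) p (1, 0) + fderiv ℝ (uncurry φ) p (0, 1))
      (uIcc a b ×ˢ uIcc (-r) r) :=
    (integrableOn_congr_fun hdiv (measurableSet_uIcc.prod measurableSet_uIcc)).2
      (hd.neg.continuousOn.integrableOn_compact (isCompact_uIcc.prod isCompact_uIcc))
  have hgauss := integral2_divergence_prod_of_hasFDerivAt (uncurry η) (uncurry φ) _ _ a (-r) b r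
    hη.continuous.continuousOn hφ.continuous.continuousOn (fun p _ => (hη p).hasFDerivAt)
    (fun p _ => (hφ p).hasFDerivAt) hint
  have hlhs : ∫ t in a..b, ∫ x in -r..r, fderiv ℝ (uncurry η) (t, x) (1, 0) +
      fderiv ℝ (uncurry φ) (t, x) (0, 1) = -∫ t in a..b, ∫ x, d t x := by
    rw [← intervalIntegral.integral_neg]
    refine intervalIntegral.integral_congr fun t ht => ?_
    simp only [← hIoc (hdK t ht), ← intervalIntegral.integral_neg]
    exact intervalIntegral.integral_congr fun x hx => hdiv (t, x) ⟨ht, hx⟩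
  have hflux {y : ℝ} (hy : ∀ t ∈ uIcc a b, φ t y = 0) : ∫ t in a..b, uncurry φ (t, y) = 0 :=
    (intervalIntegral.integral_congr hy).trans intervalIntegral.integral_zero
  rw [hlhs, hflux fun t ht => (hφ_end t ht).1, hflux fun t ht => (hφ_end t ht).2] at hgauss
  simp only [uncurry_apply_pair, hIoc (hηK a left_mem_uIcc), hIoc (hηK b right_mem_uIcc),
    sub_zero, zero_add] at hgauss
  rw [← sub_eq_zero, add_sub_right_comm, ← hgauss, neg_add_cancel]

end BalanceLaw

section KudryashovSinelshchikov

/-- The left-hand side of the Kudryashov–Sinelshchikov equation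
`uₜ + A u uₓ + β uₓₓₓ - B β (u uₓₓ)ₓ - C β uₓ uₓₓ - ε uₓₓ = 0`, whose solutions are its zeros. -/
noncomputable def ksOperator (A B C β ε : ℝ) (u : ℝ → ℝ → ℝ) (t x : ℝ) : ℝ :=
  deriv (fun τ => u τ x) t
    + A * u t x * deriv (u t) x
    + β * deriv (deriv (deriv (u t))) x
    - B * β * deriv (fun y => u t y * deriv (deriv (u t)) y) x
    - C * β * deriv (u t) x * deriv (deriv (u t)) x
    - ε * deriv (deriv (u t)) x

/-- The energy density `u² + β uₓ²`; its integral over `ℝ` is conserved by the equation with `ε = 0`,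
`B = 2A/3`, `C = -A/3`. -/
noncomputable def ksEnergyDensity (β : ℝ) (u : ℝ → ℝ → ℝ) (t x : ℝ) : ℝ :=
  u t x ^ 2 + β * deriv (u t) x ^ 2

/-- The energy dissipated by the viscous term `ε uₓₓ`, per unit of time and length. -/
noncomputable def ksDissipation (β ε : ℝ) (u : ℝ → ℝ → ℝ) (t x : ℝ) : ℝ :=
  2 * ε * deriv (u t) x ^ 2 + 2 * β * ε * deriv (deriv (u t)) x ^ 2

/-- The flux of the energy density `ksEnergyDensity` for `B = 2A/3` and `C = -A/3`. It is found by
writing `(2u - 2β uₓₓ) · ksOperator` as the time derivative of the density plus the dissipation plus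
an exact `x`-derivative. -/
noncomputable def ksEnergyFlux (A β ε : ℝ) (u : ℝ → ℝ → ℝ) (t x : ℝ) : ℝ :=
  2 * A / 3 * u t x ^ 3
    + 2 * β * (u t x * deriv (deriv (u t)) x)
    - β * deriv (u t) x ^ 2
    - 4 * A / 3 * β * (u t x ^ 2 * deriv (deriv (u t)) x)
    - β ^ 2 * deriv (deriv (u t)) x ^ 2
    + 2 * A / 3 * β ^ 2 * (u t x * deriv (deriv (u t)) x ^ 2)
    - 2 * ε * (u t x * deriv (u t) x)
    - 2 * β * (deriv (u t) x * deriv (fun s => u s x) t)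

variable {A β ε : ℝ} {u : ℝ → ℝ → ℝ} {K : Set ℝ} {a b : ℝ}

lemma differentiable_ksEnergyDensity (hu : ContDiff ℝ 2 (uncurry u)) :
    Differentiable ℝ (uncurry (ksEnergyDensity β u)) := by
  have h0 := hu.differentiable two_ne_zero
  have h1 := (contDiff_uncurry_deriv_snd (m := 1) hu (by norm_num)).differentiable one_ne_zero
  exact (h0.pow 2).add ((h1.pow 2).const_mul β)

lemma continuous_ksDissipation (hu : ContDiff ℝ 2 (uncurry u)) :
    Continuous (uncurry (ksDissipation β ε u)) := by
  have hux := contDiff_uncurry_deriv_snd (m := 1) hu (by norm_num)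
  have huxx := contDiff_uncurry_deriv_snd (m := 0) hux (by norm_num)
  exact ((hux.continuous.pow 2).const_mul _).add ((huxx.continuous.pow 2).const_mul _)

lemma differentiable_ksEnergyFlux (hu : ContDiff ℝ 3 (uncurry u)) :
    Differentiable ℝ (uncurry (ksEnergyFlux A β ε u)) := by
  have hu' : Differentiable ℝ fun p : ℝ × ℝ => u p.1 p.2 := hu.differentiable three_ne_zero
  have hcx := contDiff_uncurry_deriv_snd (m := 2) hu (by norm_num)
  have hux : Differentiable ℝ fun p : ℝ × ℝ => deriv (u p.1) p.2 := hcx.differentiable two_ne_zero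
  have huxx : Differentiable ℝ fun p : ℝ × ℝ => deriv (deriv (u p.1)) p.2 :=
    (contDiff_uncurry_deriv_snd (m := 1) hcx (by norm_num)).differentiable one_ne_zero
  have hut : Differentiable ℝ fun p : ℝ × ℝ => deriv (fun s => u s p.2) p.1 :=
    (contDiff_uncurry_deriv_fst (m := 2) hu (by norm_num)).differentiable two_ne_zero
  simp only [uncurry_def, ksEnergyFlux]
  fun_prop

lemma deriv_ksEnergyDensity (hu : ContDiff ℝ 2 (uncurry u)) (t x : ℝ) :
    deriv (fun s => ksEnergyDensity β u s x) t =
      2 * u t x * deriv (fun s => u s x) t +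
        2 * β * deriv (u t) x * deriv (fun y => deriv (fun s => u s y) t) x := by
  have hline : Differentiable ℝ fun s : ℝ => (s, x) := by fun_prop
  have hut : HasDerivAt (fun s => u s x) (deriv (fun s => u s x) t) t :=
    (((hu.differentiable two_ne_zero).comp hline) t).hasDerivAt
  have huxt : HasDerivAt (fun s => deriv (u s) x) (deriv (fun s => deriv (u s) x) t) t :=
    ((((contDiff_uncurry_deriv_snd (m := 1) hu (by norm_num)).differentiable
      one_ne_zero).comp hline) t).hasDerivAt
  have h : HasDerivAt (fun s => ksEnergyDensity β u s x) _ t :=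
    (hut.pow 2).add ((huxt.pow 2).const_mul β)
  rw [h.deriv, deriv_fst_deriv_snd_comm hu]
  ring

theorem deriv_ksEnergyDensity_add_deriv_ksEnergyFlux_add_ksDissipation
    (hu : ContDiff ℝ 3 (uncurry u)) (t x : ℝ) :
    deriv (fun s => ksEnergyDensity β u s x) t + deriv (ksEnergyFlux A β ε u t) x +
        ksDissipation β ε u t x =
      (2 * u t x - 2 * β * deriv (deriv (u t)) x) *
        ksOperator A (2 * A / 3) (-(A / 3)) β ε u t x := by
  have hut : ContDiff ℝ 3 (u t) := hu.comp (contDiff_prodMk_right t)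
  have hux : ContDiff ℝ 2 (deriv (u t)) := ContDiff.deriv' (n := 2) hut
  have h0 : HasDerivAt (u t) (deriv (u t) x) x :=
    (hut.differentiable three_ne_zero x).hasDerivAt
  have h1 : HasDerivAt (deriv (u t)) (deriv (deriv (u t)) x) x :=
    (hux.differentiable two_ne_zero x).hasDerivAt
  have h2 : HasDerivAt (deriv (deriv (u t))) (deriv (deriv (deriv (u t))) x) x :=
    (hux.differentiable_deriv_two x).hasDerivAt
  have hτ : HasDerivAt (fun y => deriv (fun s => u s y) t)
      (deriv (fun y => deriv (fun s => u s y) t) x) x :=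
    ((((contDiff_uncurry_deriv_fst (m := 2) hu (by norm_num)).comp
      (contDiff_prodMk_right t)).differentiable two_ne_zero) x).hasDerivAt
  have hflux : HasDerivAt (ksEnergyFlux A β ε u t) _ x :=
    (((((((h0.pow 3).const_mul (2 * A / 3)).add ((h0.mul h2).const_mul (2 * β))).sub
      ((h1.pow 2).const_mul β)).sub (((h0.pow 2).mul h2).const_mul (4 * A / 3 * β))).sub
      ((h2.pow 2).const_mul (β ^ 2))).add
      ((h0.mul (h2.pow 2)).const_mul (2 * A / 3 * β ^ 2))).sub
      ((h0.mul h1).const_mul (2 * ε)) |>.sub ((h1.mul hτ).const_mul (2 * β))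
  have hdisp : HasDerivAt (fun y => u t y * deriv (deriv (u t)) y) _ x := h0.mul h2
  rw [deriv_ksEnergyDensity (hu.of_le (by norm_num)), hflux.deriv, ksOperator, hdisp.deriv,
    ksDissipation]
  simp only [Pi.pow_apply]
  ring

lemma integral_ksEnergyDensity {t : ℝ} (hut : ContDiff ℝ 1 (u t)) (hK : IsCompact K)
    (huK : ∀ x ∉ K, u t x = 0) :
    ∫ x, ksEnergyDensity β u t x = (∫ x, u t x ^ 2) + β * ∫ x, deriv (u t) x ^ 2 := by
  have huxK := deriv_eq_zero_of_eq_zero_off_isClosed hK.isClosed huK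
  have hint_u := integrable_sq_of_eq_zero_off_isCompact hK hut.continuous huK
  have hint_ux := integrable_sq_of_eq_zero_off_isCompact hK (hut.continuous_deriv le_rfl) huxK
  simp only [ksEnergyDensity]
  rw [integral_add hint_u (hint_ux.const_mul β), integral_const_mul]

lemma integral_integral_ksDissipation (hu : ContDiff ℝ 2 (uncurry u)) (hK : IsCompact K)
    (huK : ∀ t ∈ uIcc a b, ∀ x ∉ K, u t x = 0) :
    ∫ t in a..b, ∫ x, ksDissipation β ε u t x =
      2 * ε * (∫ t in a..b, ∫ x, deriv (u t) x ^ 2) +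
        2 * β * ε * ∫ t in a..b, ∫ x, deriv (deriv (u t)) x ^ 2 := by
  have hux := contDiff_uncurry_deriv_snd (m := 1) hu (by norm_num)
  have huxx := contDiff_uncurry_deriv_snd (m := 0) hux (by norm_num)
  have huxK (t) (ht : t ∈ uIcc a b) := deriv_eq_zero_of_eq_zero_off_isClosed hK.isClosed (huK t ht)
  have huxxK (t) (ht : t ∈ uIcc a b) :=
    deriv_eq_zero_of_eq_zero_off_isClosed hK.isClosed (huxK t ht)
  have hint {g : ℝ → ℝ → ℝ} (hg : Continuous (uncurry g))
      (hgK : ∀ t ∈ uIcc a b, ∀ x ∉ K, g t x = 0) :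
      IntervalIntegrable (fun t => ∫ x, g t x ^ 2) volume a b :=
    intervalIntegrable_integral_of_eq_zero_off_isCompact hK (hg.pow 2) fun t ht x hx => by
      simp [hgK t ht x hx]
  have hslice : ∀ t ∈ uIcc a b, ∫ x, ksDissipation β ε u t x =
      2 * ε * (∫ x, deriv (u t) x ^ 2) + 2 * β * ε * ∫ x, deriv (deriv (u t)) x ^ 2 := by
    intro t ht
    have hint_ux :=
      integrable_sq_of_eq_zero_off_isCompact hK (hux.continuous.uncurry_left t) (huxK t ht)
    have hint_uxx :=
      integrable_sq_of_eq_zero_off_isCompact hK (huxx.continuous.uncurry_left t) (huxxK t ht)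
    simp only [ksDissipation]
    rw [integral_add (hint_ux.const_mul _) (hint_uxx.const_mul _), integral_const_mul,
      integral_const_mul]
  rw [intervalIntegral.integral_congr hslice, intervalIntegral.integral_add
      ((hint hux.continuous huxK).const_mul _) ((hint huxx.continuous huxxK).const_mul _),
    intervalIntegral.integral_const_mul, intervalIntegral.integral_const_mul]

theorem integral_ksEnergyDensity_add_integral_ksDissipation (hu : ContDiff ℝ 3 (uncurry u))
    (hK : IsCompact K) (huK : ∀ t ∈ uIcc a b, ∀ x ∉ K, u t x = 0)
    (hPDE : ∀ t ∈ uIcc a b, ∀ x, ksOperator A (2 * A / 3) (-(A / 3)) β ε u t x = 0) :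
    (∫ x, ksEnergyDensity β u b x) + ∫ t in a..b, ∫ x, ksDissipation β ε u t x =
      ∫ x, ksEnergyDensity β u a x := by
  have huxK (t) (ht : t ∈ uIcc a b) := deriv_eq_zero_of_eq_zero_off_isClosed hK.isClosed (huK t ht)
  have huxxK (t) (ht : t ∈ uIcc a b) :=
    deriv_eq_zero_of_eq_zero_off_isClosed hK.isClosed (huxK t ht)
  have hu2 : ContDiff ℝ 2 (uncurry u) := hu.of_le (by norm_num)
  refine integral_add_integral_integral_eq_of_balanceLaw (φ := ksEnergyFlux A β ε u)
    (differentiable_ksEnergyDensity hu2) (differentiable_ksEnergyFlux hu)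
    (continuous_ksDissipation hu2) hK.isBounded ?_ ?_ ?_ ?_
  · intro t ht x hx
    simp [ksEnergyDensity, huK t ht x hx, huxK t ht x hx]
  · intro t ht x hx
    simp [ksEnergyFlux, huK t ht x hx, huxK t ht x hx, huxxK t ht x hx]
  · intro t ht x hx
    simp [ksDissipation, huxK t ht x hx, huxxK t ht x hx]
  · intro t ht x
    rw [deriv_ksEnergyDensity_add_deriv_ksEnergyFlux_add_ksDissipation hu, hPDE t ht x, mul_zero]

theorem stmt_1_general (hu : ContDiff ℝ 3 (uncurry u)) (hK : IsCompact K)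
    (huK : ∀ t ∈ uIcc a b, ∀ x ∉ K, u t x = 0)
    (hPDE : ∀ t ∈ uIcc a b, ∀ x, ksOperator A (2 * A / 3) (-(A / 3)) β ε u t x = 0) :
    (∫ x, u b x ^ 2) + β * (∫ x, deriv (u b) x ^ 2)
        + 2 * ε * (∫ t in a..b, ∫ x, deriv (u t) x ^ 2)
        + 2 * β * ε * (∫ t in a..b, ∫ x, deriv (deriv (u t)) x ^ 2)
      = (∫ x, u a x ^ 2) + β * ∫ x, deriv (u a) x ^ 2 := by
  have hslice (t) : ContDiff ℝ 1 (u t) :=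
    (hu.comp (contDiff_prodMk_right t)).of_le (by norm_num)
  have hu2 : ContDiff ℝ 2 (uncurry u) := hu.of_le (by norm_num)
  rw [← integral_ksEnergyDensity (hslice a) hK (huK a left_mem_uIcc),
    ← integral_ksEnergyDensity (hslice b) hK (huK b right_mem_uIcc), add_assoc,
    ← integral_integral_ksDissipation hu2 hK huK]
  exact integral_ksEnergyDensity_add_integral_ksDissipation hu hK huK hPDE

end KudryashovSinelshchikov

/-- A priori `L²` estimate for the Kudryashov–Sinelshchikov equation with the
energy-preserving parameter choice `B = 2A/3`, `C = -A/3`. -/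
theorem stmt_1
    (A ε β C₀ : ℝ) (hA : A ≠ 0) (hε : 0 < ε) (hβ : 0 < β) (hC₀pos : 0 < C₀)
    (u : ℝ → ℝ → ℝ)
    (hu : ContDiff ℝ (⊤ : ℕ∞) (Function.uncurry u))
    (hsupp : ∃ R > (0:ℝ), ∀ t x : ℝ, R ≤ |x| → u t x = 0)
    (hPDE : ∀ t : ℝ, 0 ≤ t → ∀ x : ℝ,
      deriv (fun τ => u τ x) t
        + A * u t x * deriv (u t) x
        + β * deriv (deriv (deriv (u t))) x
        - (2 * A / 3) * β * deriv (fun y => u t y * deriv (deriv (u t)) y) x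
        - (-(A / 3)) * β * deriv (u t) x * deriv (deriv (u t)) x
        - ε * deriv (deriv (u t)) x = 0)
    (hC₀ : (∫ x : ℝ, (u 0 x) ^ 2) + β * (∫ x : ℝ, (deriv (u 0) x) ^ 2) ≤ C₀) :
    ∀ t : ℝ, 0 ≤ t →
      (∫ x : ℝ, (u t x) ^ 2) + β * (∫ x : ℝ, (deriv (u t) x) ^ 2)
        + 2 * ε * (∫ s in (0:ℝ)..t, ∫ x : ℝ, (deriv (u s) x) ^ 2)
        + 2 * β * ε * (∫ s in (0:ℝ)..t, ∫ x : ℝ, (deriv (deriv (u s)) x) ^ 2)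
      ≤ C₀ := by
  intro t ht
  obtain ⟨R, -, hR⟩ := hsupp
  exact (stmt_1_general (contDiff_infty.1 hu 3) (isCompact_closedBall 0 R)
    (fun s _ x hx => hR s x (not_le.1 (hx ∘ mem_closedBall_zero_iff.2)).le)
    fun s hs => hPDE s (uIcc_of_le ht ▸ hs).1).trans_le hC₀
end

section
/- Let f : ℝ → ℝ be a smooth function with compact support, let A, K, β, ε be real numbers, and set B = 2A/3, C = −A/3. Then ∫_ℝ (K f³ − ε² f'') · (A f f' + β f''' − Bβ (f f'')' − Cβ f' f'' − ε f'') dx = 3Kε ∫_ℝ f² (f')² dx + ε³ ∫_ℝ (f'')² dx − Aε² ∫_ℝ f f' f'' dx − 3Kβ ∫_ℝ f² f' f'' dx + (7A/3) K β ∫_ℝ f³ f' f'' dx. -/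
open MeasureTheory

/-!
Integrating by parts with compact support replaces `φ(f) v'` by `-φ'(f) f' v`, and `h(f) f'` is an
exact derivative. This settles every term except the one from `f'' (f f'')'`, for which
`f'' (f f'')' = ½ f' f''² + ½ (f f''²)'`. Testing with `f''` therefore leaves the multiple
`B / 2 + C` of `∫ f' f''²`, and `B = 2A/3`, `C = -A/3` makes it vanish.
-/

theorem integral_mul_deriv_eq_neg_deriv_mul_of_hasCompactSupport {A : Type*} [NormedRing A]
    [NormedAlgebra ℝ A] {u v : ℝ → A} (hu : ContDiff ℝ 1 u) (hv : ContDiff ℝ 1 v)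
    (hv_supp : HasCompactSupport v) :
    ∫ x, u x * deriv v x = -∫ x, deriv u x * v x := by
  have hu' := hu.continuous_deriv_one
  have hv' := hv.continuous_deriv_one
  exact integral_mul_deriv_eq_deriv_mul_of_integrable
    (fun x _ ↦ (hu.differentiable_one x).hasDerivAt)
    (fun x _ ↦ (hv.differentiable_one x).hasDerivAt)
    ((hu.continuous.mul hv').integrable_of_hasCompactSupport hv_supp.deriv.mul_left)
    ((hu'.mul hv.continuous).integrable_of_hasCompactSupport hv_supp.mul_left)
    ((hu.continuous.mul hv.continuous).integrable_of_hasCompactSupport hv_supp.mul_left)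

theorem integral_comp_mul_deriv_eq_neg_of_hasCompactSupport {φ u v : ℝ → ℝ} (hφ : ContDiff ℝ 1 φ)
    (hu : ContDiff ℝ 1 u) (hv : ContDiff ℝ 1 v) (hv_supp : HasCompactSupport v) :
    ∫ x, φ (u x) * deriv v x = -∫ x, deriv φ (u x) * deriv u x * v x := by
  have deriv_comp_u (x : ℝ) : deriv (φ ∘ u) x = deriv φ (u x) * deriv u x :=
    deriv_comp x (hφ.differentiable_one _) (hu.differentiable_one x)
  simpa only [deriv_comp_u, Function.comp_apply] using
    integral_mul_deriv_eq_neg_deriv_mul_of_hasCompactSupport (hφ.comp hu) hv hv_supp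

theorem integral_comp_mul_deriv_self_eq_zero {h u : ℝ → ℝ} (hh : Continuous h)
    (hu : ContDiff ℝ 1 u) (hu_supp : HasCompactSupport u) :
    ∫ x, h (u x) * deriv u x = 0 := by
  let H (y : ℝ) : ℝ := ∫ t in (0 : ℝ)..y, h t
  have H_zero : H 0 = 0 := intervalIntegral.integral_same
  have hasDerivAt_H (y : ℝ) : HasDerivAt H (h y) y :=
    (hh.integral_hasStrictDerivAt 0 y).hasDerivAt
  have hasDerivAt_H_comp (x : ℝ) : HasDerivAt (H ∘ u) (h (u x) * deriv u x) x :=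
    (hasDerivAt_H (u x)).comp x (hu.differentiable_one x).hasDerivAt
  have H_comp_continuous : Continuous (H ∘ u) :=
    continuous_iff_continuousAt.2 fun x ↦ (hasDerivAt_H_comp x).continuousAt
  exact integral_eq_zero_of_hasDerivAt_of_integrable hasDerivAt_H_comp
    (((hh.comp hu.continuous).mul hu.continuous_deriv_one).integrable_of_hasCompactSupport
      hu_supp.deriv.mul_left)
    (H_comp_continuous.integrable_of_hasCompactSupport (hu_supp.comp_left H_zero))

theorem integral_mul_deriv_mul_self {u v : ℝ → ℝ} (hu : ContDiff ℝ 1 u) (hv : ContDiff ℝ 1 v)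
    (hv_supp : HasCompactSupport v) :
    ∫ x, v x * deriv (fun y ↦ u y * v y) x = 1 / 2 * ∫ x, deriv u x * v x ^ 2 := by
  have hu' := hu.continuous_deriv_one
  have hv' := hv.continuous_deriv_one
  have product_rule (x : ℝ) :
      deriv (fun y ↦ u y * v y) x = deriv u x * v x + u x * deriv v x :=
    deriv_fun_mul (hu.differentiable_one x) (hv.differentiable_one x)
  have by_parts : ∫ x, v x * deriv (fun y ↦ u y * v y) x = -∫ x, deriv v x * (u x * v x) :=
    integral_mul_deriv_eq_neg_deriv_mul_of_hasCompactSupport hv (hu.mul hv) hv_supp.mul_left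
  have v_sq_supp : HasCompactSupport fun x ↦ v x ^ 2 :=
    hv_supp.comp_left (g := (· ^ 2)) (zero_pow two_ne_zero)
  have integrable_deriv_left : Integrable fun x ↦ deriv u x * v x ^ 2 :=
    (hu'.mul (hv.continuous.pow 2)).integrable_of_hasCompactSupport v_sq_supp.mul_left
  have integrable_deriv_right : Integrable fun x ↦ deriv v x * (u x * v x) :=
    (hv'.mul (hu.continuous.mul hv.continuous)).integrable_of_hasCompactSupport
      hv_supp.mul_left.mul_left
  have expanded : ∫ x, v x * deriv (fun y ↦ u y * v y) x =
      (∫ x, deriv u x * v x ^ 2) + ∫ x, deriv v x * (u x * v x) := by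
    rw [← integral_add integrable_deriv_left integrable_deriv_right]
    congr! 2 with x
    rw [product_rule]
    ring
  linarith

/-- The spatial part of the viscous Kudryashov–Sinelshchikov operator applied to `f`, where `ε` is
the viscosity and `A`, `B`, `C`, `β` are the coefficients of the equation. Iterated `deriv` is used
throughout, so the definition is meaningful where `f` is three times differentiable. -/
noncomputable def kudryashovSinelshchikov (A B C β ε : ℝ) (f : ℝ → ℝ) (x : ℝ) : ℝ :=
  A * f x * deriv f x + β * deriv (deriv (deriv f)) x
    - B * β * deriv (fun y ↦ f y * deriv (deriv f) y) x
    - C * β * deriv f x * deriv (deriv f) x - ε * deriv (deriv f) x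

namespace kudryashovSinelshchikov

variable {f : ℝ → ℝ}

theorem continuous (hf : ContDiff ℝ 3 f) (A B C β ε : ℝ) :
    Continuous (kudryashovSinelshchikov A B C β ε f) := by
  have hf₁ : ContDiff ℝ 2 (deriv f) := hf.deriv'
  have hf₂ : ContDiff ℝ 1 (deriv (deriv f)) := hf₁.deriv'
  have hff₂ : Continuous (deriv fun y ↦ f y * deriv (deriv f) y) :=
    ((hf.of_le (by norm_num)).mul hf₂).continuous_deriv_one
  unfold kudryashovSinelshchikov
  fun_prop

theorem hasCompactSupport (hsupp : HasCompactSupport f) (A B C β ε : ℝ) :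
    HasCompactSupport (kudryashovSinelshchikov A B C β ε f) := by
  have hff₂ : HasCompactSupport (deriv fun y ↦ f y * deriv (deriv f) y) :=
    hsupp.mul_right.deriv
  exact ((((hsupp.mul_left.mul_right).add hsupp.deriv.deriv.deriv.mul_left).sub
    hff₂.mul_left).sub hsupp.deriv.deriv.mul_left).sub hsupp.deriv.deriv.mul_left

theorem integral_mul {w : ℝ → ℝ} (hw : Continuous w) (hf : ContDiff ℝ 3 f)
    (hsupp : HasCompactSupport f) (A B C β ε : ℝ) :
    ∫ x, w x * kudryashovSinelshchikov A B C β ε f x =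
      A * (∫ x, w x * f x * deriv f x)
        + β * (∫ x, w x * deriv (deriv (deriv f)) x)
        - B * β * (∫ x, w x * deriv (fun y ↦ f y * deriv (deriv f) y) x)
        - C * β * (∫ x, w x * deriv f x * deriv (deriv f) x)
        - ε * (∫ x, w x * deriv (deriv f) x) := by
  have hf₁ : ContDiff ℝ 2 (deriv f) := hf.deriv'
  have hf₂ : ContDiff ℝ 1 (deriv (deriv f)) := hf₁.deriv'
  have hff₂ : ContDiff ℝ 1 fun y ↦ f y * deriv (deriv f) y := (hf.of_le (by norm_num)).mul hf₂
  have supp₂ : HasCompactSupport (deriv (deriv f)) := hsupp.deriv.deriv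
  have supp_ff₂ : HasCompactSupport fun y ↦ f y * deriv (deriv f) y := hsupp.mul_right
  have integrable_transport : Integrable fun x ↦ w x * f x * deriv f x :=
    ((hw.mul hf.continuous).mul hf₁.continuous).integrable_of_hasCompactSupport
      hsupp.deriv.mul_left
  have integrable_third : Integrable fun x ↦ w x * deriv (deriv (deriv f)) x :=
    (hw.mul hf₂.continuous_deriv_one).integrable_of_hasCompactSupport supp₂.deriv.mul_left
  have integrable_divergence : Integrable fun x ↦ w x * deriv (fun y ↦ f y * deriv (deriv f) y) x :=
    (hw.mul hff₂.continuous_deriv_one).integrable_of_hasCompactSupport supp_ff₂.deriv.mul_left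
  have integrable_first_second : Integrable fun x ↦ w x * deriv f x * deriv (deriv f) x :=
    ((hw.mul hf₁.continuous).mul hf₂.continuous).integrable_of_hasCompactSupport supp₂.mul_left
  have integrable_viscous : Integrable fun x ↦ w x * deriv (deriv f) x :=
    (hw.mul hf₂.continuous).integrable_of_hasCompactSupport supp₂.mul_left
  simp only [← integral_const_mul]
  rw [← integral_add (by fun_prop) (by fun_prop), ← integral_sub (by fun_prop) (by fun_prop),
    ← integral_sub (by fun_prop) (by fun_prop), ← integral_sub (by fun_prop) (by fun_prop)]
  refine integral_congr_ae (.of_forall fun x ↦ ?_)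
  simp only [kudryashovSinelshchikov]
  ring

theorem integral_comp_mul {φ : ℝ → ℝ} (hφ : ContDiff ℝ 1 φ) (hf : ContDiff ℝ 3 f)
    (hsupp : HasCompactSupport f) (A B C β ε : ℝ) :
    ∫ x, φ (f x) * kudryashovSinelshchikov A B C β ε f x =
      ε * (∫ x, deriv φ (f x) * deriv f x ^ 2)
        - β * (∫ x, deriv φ (f x) * deriv f x * deriv (deriv f) x)
        + B * β * (∫ x, deriv φ (f x) * f x * deriv f x * deriv (deriv f) x)
        - C * β * (∫ x, φ (f x) * deriv f x * deriv (deriv f) x) := by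
  have hf₀ : ContDiff ℝ 1 f := hf.of_le (by norm_num)
  have hf₁ : ContDiff ℝ 2 (deriv f) := hf.deriv'
  have hf₂ : ContDiff ℝ 1 (deriv (deriv f)) := hf₁.deriv'
  have transport : ∫ x, φ (f x) * f x * deriv f x = 0 :=
    integral_comp_mul_deriv_self_eq_zero (hφ.continuous.mul continuous_id) hf₀ hsupp
  have third : ∫ x, φ (f x) * deriv (deriv (deriv f)) x =
      -∫ x, deriv φ (f x) * deriv f x * deriv (deriv f) x :=
    integral_comp_mul_deriv_eq_neg_of_hasCompactSupport hφ hf₀ hf₂ hsupp.deriv.deriv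
  have divergence : ∫ x, φ (f x) * deriv (fun y ↦ f y * deriv (deriv f) y) x =
      -∫ x, deriv φ (f x) * f x * deriv f x * deriv (deriv f) x := by
    rw [integral_comp_mul_deriv_eq_neg_of_hasCompactSupport hφ hf₀ (hf₀.mul hf₂) hsupp.mul_right]
    congr! 3
    ring
  have viscous : ∫ x, φ (f x) * deriv (deriv f) x = -∫ x, deriv φ (f x) * deriv f x ^ 2 := by
    rw [integral_comp_mul_deriv_eq_neg_of_hasCompactSupport hφ hf₀ (hf₁.of_le (by norm_num))
      hsupp.deriv]
    simp only [mul_assoc, sq]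
  rw [integral_mul (w := fun x ↦ φ (f x)) (hφ.continuous.comp hf.continuous) hf hsupp,
    transport, third, divergence, viscous]
  ring

theorem integral_pow_succ_mul (n : ℕ) (hf : ContDiff ℝ 3 f) (hsupp : HasCompactSupport f)
    (A B C β ε : ℝ) :
    ∫ x, f x ^ (n + 1) * kudryashovSinelshchikov A B C β ε f x =
      (n + 1) * ε * (∫ x, f x ^ n * deriv f x ^ 2)
        - (n + 1) * β * (∫ x, f x ^ n * deriv f x * deriv (deriv f) x)
        + ((n + 1) * B - C) * β * (∫ x, f x ^ (n + 1) * deriv f x * deriv (deriv f) x) := by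
  have deriv_pow_succ (y : ℝ) : deriv (fun z : ℝ ↦ z ^ (n + 1)) y = (n + 1) * y ^ n := by simp
  rw [integral_comp_mul (φ := fun z ↦ z ^ (n + 1)) (by fun_prop) hf hsupp]
  simp only [deriv_pow_succ]
  simp only [pow_succ, mul_assoc, integral_const_mul]
  ring

theorem integral_deriv_deriv_mul (hf : ContDiff ℝ 3 f) (hsupp : HasCompactSupport f)
    (A B C β ε : ℝ) :
    ∫ x, deriv (deriv f) x * kudryashovSinelshchikov A B C β ε f x =
      A * (∫ x, f x * deriv f x * deriv (deriv f) x)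
        - (B / 2 + C) * β * (∫ x, deriv f x * deriv (deriv f) x ^ 2)
        - ε * (∫ x, deriv (deriv f) x ^ 2) := by
  have hf₁ : ContDiff ℝ 2 (deriv f) := hf.deriv'
  have hf₂ : ContDiff ℝ 1 (deriv (deriv f)) := hf₁.deriv'
  have transport : ∫ x, deriv (deriv f) x * f x * deriv f x =
      ∫ x, f x * deriv f x * deriv (deriv f) x := by
    congr! 2
    ring
  have third : ∫ x, deriv (deriv f) x * deriv (deriv (deriv f)) x = 0 :=
    integral_comp_mul_deriv_self_eq_zero continuous_id hf₂ hsupp.deriv.deriv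
  have divergence : ∫ x, deriv (deriv f) x * deriv (fun y ↦ f y * deriv (deriv f) y) x =
      1 / 2 * ∫ x, deriv f x * deriv (deriv f) x ^ 2 :=
    integral_mul_deriv_mul_self (hf.of_le (by norm_num)) hf₂ hsupp.deriv.deriv
  have first_second : ∫ x, deriv (deriv f) x * deriv f x * deriv (deriv f) x =
      ∫ x, deriv f x * deriv (deriv f) x ^ 2 := by
    congr! 2
    ring
  rw [integral_mul hf₂.continuous hf hsupp, transport, third, divergence, first_second]
  simp only [← sq]
  ring

end kudryashovSinelshchikov

theorem stmt_6_general {f : ℝ → ℝ} (hf : ContDiff ℝ 3 f) (hsupp : HasCompactSupport f)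
    (A B C K β ε : ℝ) :
    ∫ x, (K * f x ^ 3 - ε ^ 2 * deriv (deriv f) x) * kudryashovSinelshchikov A B C β ε f x =
      3 * K * ε * (∫ x, f x ^ 2 * deriv f x ^ 2)
        + ε ^ 3 * (∫ x, deriv (deriv f) x ^ 2)
        - A * ε ^ 2 * (∫ x, f x * deriv f x * deriv (deriv f) x)
        - 3 * K * β * (∫ x, f x ^ 2 * deriv f x * deriv (deriv f) x)
        + (3 * B - C) * K * β * (∫ x, f x ^ 3 * deriv f x * deriv (deriv f) x)
        + (B / 2 + C) * β * ε ^ 2 * (∫ x, deriv f x * deriv (deriv f) x ^ 2) := by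
  set L := kudryashovSinelshchikov A B C β ε f
  have hf₂ : Continuous (deriv (deriv f)) := by
    have hf₁ : ContDiff ℝ 2 (deriv f) := hf.deriv'
    exact hf₁.continuous_deriv (by norm_num)
  have hL : Continuous L := kudryashovSinelshchikov.continuous hf A B C β ε
  have hL_supp : HasCompactSupport L :=
    kudryashovSinelshchikov.hasCompactSupport hsupp A B C β ε
  have split : ∫ x, (K * f x ^ 3 - ε ^ 2 * deriv (deriv f) x) * L x =
      K * (∫ x, f x ^ 3 * L x) - ε ^ 2 * ∫ x, deriv (deriv f) x * L x := by
    rw [← integral_const_mul, ← integral_const_mul, ← integral_sub]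
    · simp only [sub_mul, mul_assoc]
    · exact (((hf.continuous.pow 3).mul hL).integrable_of_hasCompactSupport
        hL_supp.mul_left).const_mul K
    · exact ((hf₂.mul hL).integrable_of_hasCompactSupport hL_supp.mul_left).const_mul _
  rw [split, kudryashovSinelshchikov.integral_pow_succ_mul 2 hf hsupp,
    kudryashovSinelshchikov.integral_deriv_deriv_mul hf hsupp]
  push_cast
  ring

/-- The key integral identity behind the `L⁴` energy estimate for the
Kudryashov–Sinelshchikov equation with `B = 2A/3`, `C = -A/3`: multiplying the
spatial operator by `K f³ - ε² f''` and integrating by parts. -/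
theorem stmt_6 (f : ℝ → ℝ) (hf : ContDiff ℝ (⊤ : ℕ∞) f) (hsupp : HasCompactSupport f)
    (A K β ε : ℝ) :
    ∫ x : ℝ, (K * (f x) ^ 3 - ε ^ 2 * deriv (deriv f) x) *
      (A * f x * deriv f x + β * deriv (deriv (deriv f)) x
        - (2 * A / 3) * β * deriv (fun y => f y * deriv (deriv f) y) x
        - (-(A / 3)) * β * deriv f x * deriv (deriv f) x
        - ε * deriv (deriv f) x)
    = 3 * K * ε * (∫ x : ℝ, (f x) ^ 2 * (deriv f x) ^ 2)
      + ε ^ 3 * (∫ x : ℝ, (deriv (deriv f) x) ^ 2)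
      - A * ε ^ 2 * (∫ x : ℝ, f x * deriv f x * deriv (deriv f) x)
      - 3 * K * β * (∫ x : ℝ, (f x) ^ 2 * deriv f x * deriv (deriv f) x)
      + (7 * A / 3) * K * β * (∫ x : ℝ, (f x) ^ 3 * deriv f x * deriv (deriv f) x) := by
  refine (stmt_6_general (contDiff_infty.1 hf 3) hsupp A (2 * A / 3) (-(A / 3)) K β ε).trans ?_
  ring
end
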